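/- arXiv:2402.07064 — 3 statements merged into one kernel-verified Lean document; each statement's English description precedes it below -/
import Mathlib

section
/- Let Ω = [ω̲, ω̄] ⊂ ℝ with 0 ≤ ω̲ < ω̄, written as Ω = {v : F_0 + vF_1 ⪰ 0} with F_0 = diag(−ω̲, ω̄), F_1 = diag(1, −1), and fix x, γ_1, γ_2, γ_3 ∈ ℝ. Consider the moment problem (N′): minimize E_μ^Ω[min{x − ω, 0}] over probability measures μ on Ω subject to E_μ^Ω[ω] ≤ γ_1, E_μ^Ω[ω²] ≤ γ_2, and E_μ^Ω[ω⁴] ≤ γ_3. Consider the SDP (N3): maximize −λ_1γ_1 − λ_2γ_2 − λ_3γ_3 − λ_4 over λ ∈ ℝ_+³ × ℝ, 2×2 PSD matrices Z, Z′, and 3×3 PSD matrices Q, Q′ subject to tr(QB_0) = x + λ_4 − tr(ZF_0), tr(Q′B_0) = λ_4 − tr(Z′F_0), tr(QB_1) = −1 + λ_1 − tr(ZF_1), tr(Q′B_1) = λ_1 − tr(Z′F_1), tr(QB_2) = tr(Q′B_2) = λ_2, tr(QB_3) = tr(Q′B_3) = 0, tr(QB_4) = tr(Q′B_4) = λ_3,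 where B_0,…,B_4 are the 3×3 matrices with y(v)y(v)^T = Σ_{α=0}^4 B_α v^α for y(v) = (1, v, v²)^T. Assume (N′) admits a minimizer and (γ_1, γ_2, γ_3, 1) ∈ int{{(E_μ^Ω[ω], E_μ^Ω[ω²], E_μ^Ω[ω⁴], E_μ^Ω[1]) : μ a non-negative finite Borel measure on Ω} + ℝ_+³ × {0}}. Then min(N′) = max(N3). -/
open MeasureTheory Matrix
open scoped BigOperators

noncomputable section

def B0 : Matrix (Fin 3) (Fin 3) ℝ := !![1, 0, 0; 0, 0, 0; 0, 0, 0]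
def B1 : Matrix (Fin 3) (Fin 3) ℝ := !![0, 1, 0; 1, 0, 0; 0, 0, 0]
def B2 : Matrix (Fin 3) (Fin 3) ℝ := !![0, 0, 1; 0, 1, 0; 1, 0, 0]
def B3 : Matrix (Fin 3) (Fin 3) ℝ := !![0, 0, 0; 0, 0, 1; 0, 1, 0]
def B4 : Matrix (Fin 3) (Fin 3) ℝ := !![0, 0, 0; 0, 0, 0; 0, 0, 1]

/-- The value set of the Newsvendor moment problem (N′) with mean, second- and
fourth-moment bounds. -/
def News4Vals (ωlo ωhi x γ1 γ2 γ3 : ℝ) : Set ℝ :=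
  {val | ∃ μ : Measure ℝ, IsProbabilityMeasure μ ∧ μ (Set.Icc ωlo ωhi)ᶜ = 0 ∧
    (∫ ω, ω ∂μ) ≤ γ1 ∧ (∫ ω, ω ^ 2 ∂μ) ≤ γ2 ∧ (∫ ω, ω ^ 4 ∂μ) ≤ γ3 ∧
    val = ∫ ω, min (x - ω) 0 ∂μ}

/-- The value set of the SDP (N3). -/
def News4SDPVals (ωlo ωhi x γ1 γ2 γ3 : ℝ) : Set ℝ :=
  {val | ∃ (lam1 lam2 lam3 lam4 : ℝ) (Z Z' : Matrix (Fin 2) (Fin 2) ℝ)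
      (Q Q' : Matrix (Fin 3) (Fin 3) ℝ),
    0 ≤ lam1 ∧ 0 ≤ lam2 ∧ 0 ≤ lam3 ∧
    Z.PosSemidef ∧ Z'.PosSemidef ∧ Q.PosSemidef ∧ Q'.PosSemidef ∧
    (Q * B0).trace = x + lam4 - (Z * !![-ωlo, 0; 0, ωhi]).trace ∧
    (Q' * B0).trace = lam4 - (Z' * !![-ωlo, 0; 0, ωhi]).trace ∧
    (Q * B1).trace = -1 + lam1 - (Z * !![(1:ℝ), 0; 0, -1]).trace ∧
    (Q' * B1).trace = lam1 - (Z' * !![(1:ℝ), 0; 0, -1]).trace ∧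
    (Q * B2).trace = lam2 ∧ (Q' * B2).trace = lam2 ∧
    (Q * B3).trace = 0 ∧ (Q' * B3).trace = 0 ∧
    (Q * B4).trace = lam3 ∧ (Q' * B4).trace = lam3 ∧
    val = -lam1 * γ1 - lam2 * γ2 - lam3 * γ3 - lam4}

/-!
Write `φ v = (v, v², v⁴, 1)`, `c v = min (x - v) 0` and `w = (γ₁, γ₂, γ₃, 1)`. The pairs
`(∫ φ dμ + slack, r)` with `∫ c dμ ≤ r` form a convex cone, and `(w, p)` lies on its boundary when
`p` is the optimal value. A hyperplane supporting the cone at `(w, p)` is not vertical, because `w`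
is interior to the projection of the cone, so it is the graph of a functional `g` with `g ∘ φ ≤ c`
and `p ≤ g w`: the semi-infinite dual has no gap and is attained.

With `g = -(λ₁, λ₂, λ₃, λ₄)` the constraint `g ∘ φ ≤ c` says that two quartics without cubic term,
with nonnegative quadratic and quartic coefficients, are nonnegative on `[ω̲, ω̄]`. At a minimizer
`m`, such a quartic is `P m + P' m * (v - m)` plus the sum of squares
`(a₂ + 2 a₄ m²) (v - m)² + a₄ (v² - m²)²`, and the first-order condition at `m` turns the linear
term into a nonnegative combination of `v - ω̲` and `ω̄ - v`. These are the matrices `Q` and `Z`.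
-/

section ConicDuality

variable {E : Type*} [TopologicalSpace E]

theorem prodMk_notMem_interior_of_forall_le {K : Set (E × ℝ)} {w : E} {p : ℝ}
    (hp : ∀ r, (w, r) ∈ K → p ≤ r) : (w, p) ∉ interior K := by
  intro hmem
  have hnhds : ∀ᶠ r in nhds p, (w, r) ∈ K :=
    (Continuous.prodMk_right w).continuousAt (mem_interior_iff_mem_nhds.1 hmem)
  obtain ⟨r, hrK, hrp⟩ :=
    ((hnhds.filter_mono nhdsWithin_le_nhds).and (self_mem_nhdsWithin (s := Set.Iio p))).exists
  exact (hp r hrK).not_gt hrp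

variable [AddCommGroup E] [Module ℝ E]

theorem nonpos_of_forall_le_of_pointedCone {K : PointedCone ℝ E} {f : E →L[ℝ] ℝ} {b : ℝ}
    (hf : ∀ y ∈ K, f y ≤ b) {y : E} (hy : y ∈ K) : f y ≤ 0 := by
  by_contra! hpos
  have hb : 0 ≤ b := by simpa using hf 0 K.zero_mem
  have ht : 0 ≤ (b + 1) / f y := by positivity
  have hle := hf _ (K.smul_mem ht hy)
  rw [map_smul, smul_eq_mul, div_mul_cancel₀ _ hpos.ne'] at hle
  linarith

variable [IsTopologicalAddGroup E] [ContinuousSMul ℝ E]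

theorem apply_lt_of_mem_interior {K : Set E} {f : E →L[ℝ] ℝ} {b : ℝ} (hf : f ≠ 0)
    (hle : ∀ y ∈ K, f y ≤ b) {y : E} (hy : y ∈ interior K) : f y < b := by
  have himage : f '' interior K ⊆ interior (Set.Iic b) :=
    interior_maximal (Set.image_subset_iff.2 fun y hy => hle y (interior_subset hy))
      (f.isOpenMap_of_ne_zero hf _ isOpen_interior)
  simpa using himage (Set.mem_image_of_mem f hy)

/-- The point `(w, r₀)` interior to `K` plays the role of a Slater point: it forces the hyperplane
supporting `K` at `(w, p)` to be the graph of a functional `g`. -/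
theorem exists_le_apply_of_mem_interior_pointedCone {K : PointedCone ℝ (E × ℝ)} {w : E} {p r₀ : ℝ}
    (hw : (w, r₀) ∈ interior (K : Set (E × ℝ))) (hp : ∀ r, (w, r) ∈ K → p ≤ r) :
    ∃ g : E →L[ℝ] ℝ, p ≤ g w ∧ ∀ y r, (y, r) ∈ K → g y ≤ r := by
  obtain ⟨f, hf0, hfle⟩ := geometric_hahn_banach_of_nonempty_interior_point K.convex
    (prodMk_notMem_interior_of_forall_le hp) ⟨_, hw⟩
  set g : E →L[ℝ] ℝ := f.comp (.inl ℝ E ℝ)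
  set a : ℝ := f (0, 1)
  have hf (y : E) (r : ℝ) : f (y, r) = g y + r * a := by
    have hsplit : (y, r) = (y, (0 : ℝ)) + r • ((0 : E), (1 : ℝ)) := by simp
    rw [hsplit, map_add, map_smul, smul_eq_mul]
    rfl
  have ha : a < 0 := by
    have hlt := apply_lt_of_mem_interior hf0 hfle hw
    rw [hf, hf] at hlt
    have hpr := hp r₀ (interior_subset hw)
    by_contra! hnonneg
    linarith [mul_le_mul_of_nonneg_right hpr hnonneg]
  have hnonpos (y : E) (r : ℝ) (hyr : (y, r) ∈ K) : g y + r * a ≤ 0 :=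
    hf y r ▸ nonpos_of_forall_le_of_pointedCone hfle hyr
  have hnonneg : 0 ≤ g w + p * a := by simpa [hf] using hfle 0 K.zero_mem
  refine ⟨(-a)⁻¹ • g, ?_, fun y r hyr => ?_⟩
  · rw [_root_.smul_apply, smul_eq_mul, le_inv_mul_iff₀ (neg_pos.2 ha)]
    linarith
  · rw [_root_.smul_apply, smul_eq_mul, inv_mul_le_iff₀ (neg_pos.2 ha)]
    linarith [hnonpos y r hyr]

end ConicDuality

theorem integrable_of_continuousOn_of_measure_compl_eq_zero {X F : Type*} [TopologicalSpace X]
    [T2Space X] [MeasurableSpace X] [OpensMeasurableSpace X] [NormedAddCommGroup F]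
    {K : Set X} (hK : IsCompact K) {μ : Measure X} [IsFiniteMeasureOnCompacts μ] (hμ : μ Kᶜ = 0)
    {f : X → F} (hf : ContinuousOn f K) : Integrable f μ := by
  rw [← Measure.restrict_eq_self_of_ae_mem (mem_ae_iff.2 hμ)]
  exact hf.integrableOn_compact hK

section MomentProblem

variable {X : Type*} [MeasurableSpace X] {E : Type*} [NormedAddCommGroup E] [NormedSpace ℝ E]

/-- The cone of moment vectors `∫ φ dμ` of the finite measures `μ` concentrated on `S`. Only those
`μ` that integrate `φ` are admitted, so that no integral takes its default value. -/
def momentCone (S : Set X) (φ : X → E) : PointedCone ℝ E where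
  carrier := {y | ∃ μ : Measure X, IsFiniteMeasure μ ∧ μ Sᶜ = 0 ∧ Integrable φ μ ∧ ∫ v, φ v ∂μ = y}
  add_mem' := by
    rintro _ _ ⟨μ, _, hμS, hμ, rfl⟩ ⟨ν, _, hνS, hν, rfl⟩
    exact ⟨μ + ν, inferInstance, by simp [hμS, hνS], hμ.add_measure hν,
      integral_add_measure hμ hν⟩
  zero_mem' := ⟨0, inferInstance, by simp, integrable_zero_measure, integral_zero_measure φ⟩
  smul_mem' := by
    rintro (t : NNReal) _ ⟨μ, _, hμS, hμ, rfl⟩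
    exact ⟨t • μ, inferInstance, by simp [hμS], hμ.smul_measure_nnreal,
      integral_smul_nnreal_measure φ t⟩

/-- The moment problem: the costs `∫ c dμ` of the finite measures `μ` concentrated on `S` that
satisfy the conic moment constraint `w - ∫ φ dμ ∈ C`. -/
def momentProblemVals (S : Set X) (φ : X → E) (c : X → ℝ) (C : PointedCone ℝ E) (w : E) : Set ℝ :=
  {val | ∃ μ : Measure X, IsFiniteMeasure μ ∧ μ Sᶜ = 0 ∧ Integrable φ μ ∧ Integrable c μ ∧
    w - ∫ v, φ v ∂μ ∈ C ∧ val = ∫ v, c v ∂μ}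

/-- Feasibility of the functional `g` for the semi-infinite dual of `momentProblemVals`; the slack
constraint says that `-g` belongs to the dual cone of `C`. -/
structure IsMomentDualFeasible (S : Set X) (φ : X → E) (c : X → ℝ) (C : PointedCone ℝ E)
    (g : E →L[ℝ] ℝ) : Prop where
  apply_le : ∀ v ∈ S, g (φ v) ≤ c v
  apply_nonpos : ∀ s ∈ C, g s ≤ 0

/-- The values of the semi-infinite dual of `momentProblemVals`. -/
def momentDualVals (S : Set X) (φ : X → E) (c : X → ℝ) (C : PointedCone ℝ E) (w : E) : Set ℝ :=
  {val | ∃ g : E →L[ℝ] ℝ, IsMomentDualFeasible S φ c C g ∧ val = g w}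

/-- The epigraph, as a cone in `E × ℝ`, of the optimal value of `momentProblemVals` regarded as a
function of the right-hand side `w`. -/
def momentEpigraph (S : Set X) (φ : X → E) (c : X → ℝ) (C : PointedCone ℝ E) :
    PointedCone ℝ (E × ℝ) :=
  momentCone S (fun v => (φ v, c v)) ⊔ Submodule.prod C (PointedCone.positive ℝ ℝ)

variable {S : Set X} {φ : X → E} {c : X → ℝ} {C : PointedCone ℝ E} {w : E} {p : ℝ}

theorem mem_momentCone_of_mem [CompleteSpace E] [MeasurableSingletonClass X] {v : X} (hv : v ∈ S) :
    φ v ∈ momentCone S φ :=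
  ⟨.dirac v, inferInstance, by simp [Measure.dirac_apply, hv], integrable_dirac (by simp),
    integral_dirac φ v⟩

theorem mem_momentCone_sup_iff {y : E} : y ∈ momentCone S φ ⊔ C ↔
    ∃ μ : Measure X, IsFiniteMeasure μ ∧ μ Sᶜ = 0 ∧ Integrable φ μ ∧ y - ∫ v, φ v ∂μ ∈ C := by
  rw [Submodule.mem_sup]
  constructor
  · rintro ⟨_, ⟨μ, hfin, hμS, hφ, rfl⟩, s, hs, rfl⟩
    exact ⟨μ, hfin, hμS, hφ, by simpa using hs⟩
  · rintro ⟨μ, hfin, hμS, hφ, hs⟩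
    exact ⟨_, ⟨μ, hfin, hμS, hφ, rfl⟩, _, hs, add_sub_cancel _ _⟩

theorem mem_momentEpigraph_iff [CompleteSpace E] {y : E} {r : ℝ} :
    (y, r) ∈ momentEpigraph S φ c C ↔ ∃ μ : Measure X, IsFiniteMeasure μ ∧ μ Sᶜ = 0 ∧
      Integrable φ μ ∧ Integrable c μ ∧ y - ∫ v, φ v ∂μ ∈ C ∧ ∫ v, c v ∂μ ≤ r := by
  rw [momentEpigraph, mem_momentCone_sup_iff]
  refine exists_congr fun μ => and_congr_right fun _ => and_congr_right fun _ => ?_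
  constructor
  · rintro ⟨hφc, hslack⟩
    rw [integral_pair hφc.fst hφc.snd] at hslack
    exact ⟨hφc.fst, hφc.snd, hslack.1, sub_nonneg.1 hslack.2⟩
  · rintro ⟨hφ, hc, hslack, hle⟩
    rw [integral_pair hφ hc]
    exact ⟨hφ.prodMk hc, hslack, sub_nonneg.2 hle⟩

theorem le_of_mem_momentDualVals_of_mem_momentProblemVals [CompleteSpace E] {d q : ℝ}
    (hd : d ∈ momentDualVals S φ c C w) (hq : q ∈ momentProblemVals S φ c C w) : d ≤ q := by
  obtain ⟨g, hg, rfl⟩ := hd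
  obtain ⟨μ, _, hμS, hφ, hc, hslack, rfl⟩ := hq
  have hae : ∀ᵐ v ∂μ, g (φ v) ≤ c v := by
    filter_upwards [mem_ae_iff.2 hμS] with v hv using hg.apply_le v hv
  calc g w = g (w - ∫ v, φ v ∂μ) + ∫ v, g (φ v) ∂μ := by
        rw [g.integral_comp_comm hφ, ← map_add, sub_add_cancel]
    _ ≤ 0 + ∫ v, c v ∂μ :=
        add_le_add (hg.apply_nonpos _ hslack) (integral_mono_ae (g.integrable_comp hφ) hc hae)
    _ = ∫ v, c v ∂μ := zero_add _

theorem isMomentDualFeasible_of_forall_momentEpigraph [CompleteSpace E]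
    [MeasurableSingletonClass X] {g : E →L[ℝ] ℝ}
    (hg : ∀ y r, (y, r) ∈ momentEpigraph S φ c C → g y ≤ r) : IsMomentDualFeasible S φ c C g where
  apply_le _ hv := hg _ _ (Submodule.mem_sup_left (mem_momentCone_of_mem hv))
  apply_nonpos _ hs := hg _ _ (Submodule.mem_sup_right ⟨hs, le_refl (0 : ℝ)⟩)

theorem isGreatest_momentDualVals_of_isGLB [CompleteSpace E] [MeasurableSingletonClass X] {r₀ : ℝ}
    (hw : (w, r₀) ∈ interior (momentEpigraph S φ c C : Set (E × ℝ)))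
    (hp : IsGLB (momentProblemVals S φ c C w) p) : IsGreatest (momentDualVals S φ c C w) p := by
  have hupper : p ∈ upperBounds (momentDualVals S φ c C w) := fun _ hd =>
    hp.2 fun _ hq => le_of_mem_momentDualVals_of_mem_momentProblemVals hd hq
  have hle (r : ℝ) (hr : (w, r) ∈ momentEpigraph S φ c C) : p ≤ r := by
    obtain ⟨μ, hfin, hμS, hφ, hc, hslack, hμr⟩ := mem_momentEpigraph_iff.1 hr
    exact (hp.1 ⟨μ, hfin, hμS, hφ, hc, hslack, rfl⟩).trans hμr
  obtain ⟨g, hpg, hg⟩ := exists_le_apply_of_mem_interior_pointedCone hw hle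
  have hgw : g w ∈ momentDualVals S φ c C w :=
    ⟨g, isMomentDualFeasible_of_forall_momentEpigraph hg, rfl⟩
  exact ⟨hpg.antisymm (hupper hgw) ▸ hgw, hupper⟩

theorem mem_interior_momentEpigraph [CompleteSpace E]
    (hc : ∀ μ : Measure X, IsFiniteMeasure μ → μ Sᶜ = 0 → Integrable c μ) (hc0 : ∀ v ∈ S, c v ≤ 0)
    (hw : w ∈ interior ((momentCone S φ ⊔ C : PointedCone ℝ E) : Set E)) {r : ℝ} (hr : 0 < r) :
    (w, r) ∈ interior (momentEpigraph S φ c C : Set (E × ℝ)) := by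
  have hsub : ((momentCone S φ ⊔ C : PointedCone ℝ E) : Set E) ×ˢ Set.Ici (0 : ℝ) ⊆
      momentEpigraph S φ c C := by
    rintro ⟨y, r⟩ ⟨hy, hr⟩
    obtain ⟨μ, hfin, hμS, hφ, hslack⟩ := mem_momentCone_sup_iff.1 hy
    have hcost : ∫ v, c v ∂μ ≤ 0 := integral_nonpos_of_ae <| by
      filter_upwards [mem_ae_iff.2 hμS] with v hv using hc0 v hv
    exact mem_momentEpigraph_iff.2 ⟨μ, hfin, hμS, hφ, hc μ hfin hμS, hslack, hcost.trans hr⟩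
  refine interior_mono hsub ?_
  rw [interior_prod_eq, interior_Ici]
  exact ⟨hw, hr⟩

end MomentProblem

section Certificate

/-- The vector `y(v) = (1, v, v²)`, for which `y(v) y(v)ᵀ = ∑ α, v ^ α • B_α`. -/
def quadraticMonomials (v : ℝ) : Fin 3 → ℝ := ![1, v, v ^ 2]

/-- The constraints that (N3) places on one of the pairs `(Z, Q)`, `(Z', Q')`: they certify that
the quartic with coefficients `a₀, …, a₄` is nonnegative on `[lo, hi]`. -/
structure IsQuarticCertificate (lo hi a₀ a₁ a₂ a₃ a₄ : ℝ) (Z : Matrix (Fin 2) (Fin 2) ℝ)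
    (Q : Matrix (Fin 3) (Fin 3) ℝ) : Prop where
  posSemidef_left : Z.PosSemidef
  posSemidef_right : Q.PosSemidef
  trace_B0 : (Q * B0).trace = a₀ - (Z * !![-lo, 0; 0, hi]).trace
  trace_B1 : (Q * B1).trace = a₁ - (Z * !![(1 : ℝ), 0; 0, -1]).trace
  trace_B2 : (Q * B2).trace = a₂
  trace_B3 : (Q * B3).trace = a₃
  trace_B4 : (Q * B4).trace = a₄

variable {lo hi a₀ a₁ a₂ a₃ a₄ m s : ℝ}

theorem quadraticMonomials_dotProduct_mulVec (Q : Matrix (Fin 3) (Fin 3) ℝ) (v : ℝ) :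
    quadraticMonomials v ⬝ᵥ Q *ᵥ quadraticMonomials v =
      (Q * B0).trace + (Q * B1).trace * v + (Q * B2).trace * v ^ 2 + (Q * B3).trace * v ^ 3 +
        (Q * B4).trace * v ^ 4 := by
  simp only [quadraticMonomials, B0, B1, B2, B3, B4, dotProduct, mulVec, trace, diag_apply,
    mul_apply, Fin.sum_univ_three, of_apply, cons_val', cons_val, cons_val_zero, cons_val_one,
    cons_val_fin_one, mul_zero, mul_one, add_zero, zero_add]
  ring

theorem trace_mul_interval_matrices (Z : Matrix (Fin 2) (Fin 2) ℝ) (lo hi v : ℝ) :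
    (Z * !![-lo, 0; 0, hi]).trace + (Z * !![(1 : ℝ), 0; 0, -1]).trace * v =
      Z 0 0 * (v - lo) + Z 1 1 * (hi - v) := by
  simp only [trace, diag_apply, mul_apply, Fin.sum_univ_two, of_apply, cons_val', cons_val_zero,
    cons_val_one, cons_val_fin_one]
  ring

theorem quartic_coeff_eq_of_forall_eval_eq {b₀ b₁ b₂ b₃ b₄ : ℝ}
    (h : ∀ v : ℝ, a₀ + a₁ * v + a₂ * v ^ 2 + a₃ * v ^ 3 + a₄ * v ^ 4 =
      b₀ + b₁ * v + b₂ * v ^ 2 + b₃ * v ^ 3 + b₄ * v ^ 4) :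
    a₀ = b₀ ∧ a₁ = b₁ ∧ a₂ = b₂ ∧ a₃ = b₃ ∧ a₄ = b₄ := by
  have h₀ := h 0
  have h₁ := h 1
  have h₂ := h (-1)
  have h₃ := h 2
  have h₄ := h (-2)
  norm_num at h₀ h₁ h₂ h₃ h₄
  refine ⟨?_, ?_, ?_, ?_, ?_⟩ <;> linarith

theorem isQuarticCertificate_iff_forall_eval_eq {Z : Matrix (Fin 2) (Fin 2) ℝ}
    {Q : Matrix (Fin 3) (Fin 3) ℝ} :
    IsQuarticCertificate lo hi a₀ a₁ a₂ a₃ a₄ Z Q ↔ Z.PosSemidef ∧ Q.PosSemidef ∧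
      ∀ v, a₀ + a₁ * v + a₂ * v ^ 2 + a₃ * v ^ 3 + a₄ * v ^ 4 =
        quadraticMonomials v ⬝ᵥ Q *ᵥ quadraticMonomials v +
          (Z 0 0 * (v - lo) + Z 1 1 * (hi - v)) := by
  simp_rw [quadraticMonomials_dotProduct_mulVec, ← trace_mul_interval_matrices]
  constructor
  · rintro ⟨hZ, hQ, h₀, h₁, h₂, h₃, h₄⟩
    refine ⟨hZ, hQ, fun v => ?_⟩
    rw [h₀, h₁, h₂, h₃, h₄]
    ring
  · rintro ⟨hZ, hQ, h⟩
    obtain ⟨h₀, h₁, h₂, h₃, h₄⟩ := quartic_coeff_eq_of_forall_eval_eq fun v =>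
      (show _ = ((Q * B0).trace + (Z * !![-lo, 0; 0, hi]).trace) +
        ((Q * B1).trace + (Z * !![(1 : ℝ), 0; 0, -1]).trace) * v + (Q * B2).trace * v ^ 2 +
          (Q * B3).trace * v ^ 3 + (Q * B4).trace * v ^ 4 by rw [h v]; ring)
    exact ⟨hZ, hQ, by linarith, by linarith, h₂.symm, h₃.symm, h₄.symm⟩

theorem IsQuarticCertificate.nonneg {Z : Matrix (Fin 2) (Fin 2) ℝ} {Q : Matrix (Fin 3) (Fin 3) ℝ}
    (h : IsQuarticCertificate lo hi a₀ a₁ a₂ a₃ a₄ Z Q) {v : ℝ} (hv : v ∈ Set.Icc lo hi) :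
    0 ≤ a₀ + a₁ * v + a₂ * v ^ 2 + a₃ * v ^ 3 + a₄ * v ^ 4 := by
  obtain ⟨hZ, hQ, heval⟩ := isQuarticCertificate_iff_forall_eval_eq.1 h
  rw [heval]
  exact add_nonneg (hQ.dotProduct_mulVec_nonneg (quadraticMonomials v))
    (add_nonneg (mul_nonneg hZ.diag_nonneg (sub_nonneg.2 hv.1))
      (mul_nonneg hZ.diag_nonneg (sub_nonneg.2 hv.2)))

theorem deriv_mul_sub_nonneg_of_isMinOn_Icc {f : ℝ → ℝ} {f' : ℝ} (hm : m ∈ Set.Icc lo hi)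
    (hmin : IsMinOn f (Set.Icc lo hi) m) (hf : HasDerivAt f f' m) {v : ℝ}
    (hv : v ∈ Set.Icc lo hi) : 0 ≤ f' * (v - m) := by
  have hseg : segment ℝ m v ⊆ Set.Icc lo hi := (convex_Icc lo hi).segment_subset hm hv
  simpa [mul_comm] using hmin.localize.hasFDerivWithinAt_nonneg hf.hasFDerivAt.hasFDerivWithinAt
    (sub_mem_posTangentConeAt_of_segment_subset hseg)

theorem exists_nonneg_combination_of_forall_mul_sub_nonneg (hm : m ∈ Set.Icc lo hi)
    (hs : ∀ v ∈ Set.Icc lo hi, 0 ≤ s * (v - m)) :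
    ∃ z₀ z₁ : ℝ, 0 ≤ z₀ ∧ 0 ≤ z₁ ∧ ∀ v, s * (v - m) = z₀ * (v - lo) + z₁ * (hi - v) := by
  have hle : lo ≤ hi := hm.1.trans hm.2
  rcases le_total 0 s with hs0 | hs0
  · have hlo : s * (lo - m) = 0 :=
      (mul_nonpos_of_nonneg_of_nonpos hs0 (sub_nonpos.2 hm.1)).antisymm
        (hs lo (Set.left_mem_Icc.2 hle))
    exact ⟨s, 0, hs0, le_rfl, fun v => by linear_combination hlo⟩
  · have hhi : s * (hi - m) = 0 :=
      (mul_nonpos_of_nonpos_of_nonneg hs0 (sub_nonneg.2 hm.2)).antisymm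
        (hs hi (Set.right_mem_Icc.2 hle))
    exact ⟨0, -s, le_rfl, neg_nonneg.2 hs0, fun v => by linear_combination hhi⟩

theorem exists_posSemidef_of_evenQuartic_sub_tangent {k : ℝ} (hk : 0 ≤ k) (h₂ : 0 ≤ a₂)
    (h₄ : 0 ≤ a₄) (m : ℝ) :
    ∃ Q : Matrix (Fin 3) (Fin 3) ℝ, Q.PosSemidef ∧
      ∀ v, quadraticMonomials v ⬝ᵥ Q *ᵥ quadraticMonomials v =
        k + (a₂ + 2 * a₄ * m ^ 2) * (v - m) ^ 2 + a₄ * (v ^ 2 - m ^ 2) ^ 2 := by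
  have hsq (u y : Fin 3 → ℝ) : y ⬝ᵥ vecMulVec u (star u) *ᵥ y = (u ⬝ᵥ y) ^ 2 := by
    rw [star_trivial, vecMulVec_mulVec, dotProduct_smul, op_smul_eq_smul, smul_eq_mul,
      dotProduct_comm, sq]
  refine ⟨k • vecMulVec ![1, 0, 0] (star ![1, 0, 0])
    + (a₂ + 2 * a₄ * m ^ 2) • vecMulVec ![-m, 1, 0] (star ![-m, 1, 0])
    + a₄ • vecMulVec ![-m ^ 2, 0, 1] (star ![-m ^ 2, 0, 1]), ?_, fun v => ?_⟩
  · exact (((posSemidef_vecMulVec_self_star _).smul hk).add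
      ((posSemidef_vecMulVec_self_star _).smul (by positivity))).add
      ((posSemidef_vecMulVec_self_star _).smul h₄)
  · simp only [add_mulVec, smul_mulVec, dotProduct_add, dotProduct_smul, hsq, smul_eq_mul,
      quadraticMonomials, vec3_dotProduct']
    ring

theorem exists_isQuarticCertificate_iff (hle : lo ≤ hi) (h₂ : 0 ≤ a₂) (h₄ : 0 ≤ a₄) :
    (∃ Z Q, IsQuarticCertificate lo hi a₀ a₁ a₂ 0 a₄ Z Q) ↔
      ∀ v ∈ Set.Icc lo hi, 0 ≤ a₀ + a₁ * v + a₂ * v ^ 2 + a₄ * v ^ 4 := by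
  constructor
  · rintro ⟨Z, Q, hcert⟩ v hv
    simpa using hcert.nonneg hv
  intro hnonneg
  set P : ℝ → ℝ := fun v => a₀ + a₁ * v + a₂ * v ^ 2 + a₄ * v ^ 4
  obtain ⟨m, hm, hmin⟩ := isCompact_Icc.exists_isMinOn (Set.nonempty_Icc.2 hle)
    (f := P) (by fun_prop)
  have hderiv : HasDerivAt P (a₁ + 2 * a₂ * m + 4 * a₄ * m ^ 3) m := by
    convert! ((((hasDerivAt_id m).const_mul a₁).const_add a₀).add
      ((hasDerivAt_pow 2 m).const_mul a₂)).add ((hasDerivAt_pow 4 m).const_mul a₄) using 1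
    ring
  obtain ⟨z₀, z₁, hz₀, hz₁, htangent⟩ := exists_nonneg_combination_of_forall_mul_sub_nonneg hm
    fun v hv => deriv_mul_sub_nonneg_of_isMinOn_Icc hm hmin hderiv hv
  obtain ⟨Q, hQ, hQeval⟩ := exists_posSemidef_of_evenQuartic_sub_tangent (hnonneg m hm) h₂ h₄ m
  have hZ : (diagonal ![z₀, z₁]).PosSemidef :=
    .diagonal fun i => by fin_cases i <;> simpa
  refine ⟨_, Q, isQuarticCertificate_iff_forall_eval_eq.2 ⟨hZ, hQ, fun v => ?_⟩⟩
  simp only [hQeval, diagonal_apply_eq, cons_val_zero, cons_val_one, cons_val_fin_one]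
  linear_combination htangent v

end Certificate

section Newsvendor

/-- The moments constrained in (N′), together with the total mass. -/
def newsMoments (v : ℝ) : ℝ × ℝ × ℝ × ℝ := (v, v ^ 2, v ^ 4, 1)

/-- The cone `ℝ₊³ × {0}` of slacks in the moment constraints of (N′). -/
def newsSlackCone : PointedCone ℝ (ℝ × ℝ × ℝ × ℝ) :=
  Submodule.prod (PointedCone.positive ℝ ℝ)
    (Submodule.prod (PointedCone.positive ℝ ℝ) (Submodule.prod (PointedCone.positive ℝ ℝ) ⊥))

/-- The multipliers of (N3) as a functional on moment vectors, with the sign for which the dual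
objective is its value at `(γ₁, γ₂, γ₃, 1)`. -/
def newsMultiplier (lam1 lam2 lam3 lam4 : ℝ) : ℝ × ℝ × ℝ × ℝ →L[ℝ] ℝ :=
  -(.coprod (lam1 • .id ℝ ℝ) (.coprod (lam2 • .id ℝ ℝ)
    (.coprod (lam3 • .id ℝ ℝ) (lam4 • .id ℝ ℝ))))

variable {ωlo ωhi x γ1 γ2 γ3 : ℝ}

theorem mem_newsSlackCone {s1 s2 s3 s4 : ℝ} :
    (s1, s2, s3, s4) ∈ newsSlackCone ↔ 0 ≤ s1 ∧ 0 ≤ s2 ∧ 0 ≤ s3 ∧ s4 = 0 := by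
  simp [newsSlackCone, Submodule.mem_prod]

theorem newsMultiplier_apply (lam1 lam2 lam3 lam4 y1 y2 y3 y4 : ℝ) :
    newsMultiplier lam1 lam2 lam3 lam4 (y1, y2, y3, y4) =
      -lam1 * y1 - lam2 * y2 - lam3 * y3 - lam4 * y4 := by
  simp only [newsMultiplier, _root_.neg_apply, ContinuousLinearMap.coprod_apply,
    _root_.smul_apply, ContinuousLinearMap.id_apply, smul_eq_mul]
  ring

theorem exists_newsMultiplier_eq (g : ℝ × ℝ × ℝ × ℝ →L[ℝ] ℝ) :
    ∃ lam1 lam2 lam3 lam4, newsMultiplier lam1 lam2 lam3 lam4 = g := by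
  refine ⟨-g (1, 0, 0, 0), -g (0, 1, 0, 0), -g (0, 0, 1, 0), -g (0, 0, 0, 1), ?_⟩
  ext <;> simp [newsMultiplier] <;> rfl

theorem integrable_newsMoments {μ : Measure ℝ} [IsFiniteMeasure μ]
    (hμ : μ (Set.Icc ωlo ωhi)ᶜ = 0) : Integrable newsMoments μ :=
  integrable_of_continuousOn_of_measure_compl_eq_zero isCompact_Icc hμ
    (by unfold newsMoments; fun_prop)

theorem integral_newsMoments {μ : Measure ℝ} [IsFiniteMeasure μ]
    (hμ : μ (Set.Icc ωlo ωhi)ᶜ = 0) :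
    ∫ ω, newsMoments ω ∂μ =
      (∫ ω, ω ∂μ, ∫ ω, ω ^ 2 ∂μ, ∫ ω, ω ^ 4 ∂μ, (μ Set.univ).toReal) := by
  have hint {F : Type} [NormedAddCommGroup F] {f : ℝ → F} (hf : Continuous f) : Integrable f μ :=
    integrable_of_continuousOn_of_measure_compl_eq_zero isCompact_Icc hμ hf.continuousOn
  simp only [newsMoments]
  rw [integral_pair (hint (by fun_prop)) (hint (by fun_prop)),
    integral_pair (hint (by fun_prop)) (hint (by fun_prop)),
    integral_pair (hint (by fun_prop)) (hint (by fun_prop))]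
  simp [Measure.real]

theorem sub_integral_newsMoments_mem_newsSlackCone_iff {μ : Measure ℝ} [IsFiniteMeasure μ]
    (hμ : μ (Set.Icc ωlo ωhi)ᶜ = 0) {y1 y2 y3 y4 : ℝ} :
    (y1, y2, y3, y4) - ∫ ω, newsMoments ω ∂μ ∈ newsSlackCone ↔
      ∫ ω, ω ∂μ ≤ y1 ∧ ∫ ω, ω ^ 2 ∂μ ≤ y2 ∧ ∫ ω, ω ^ 4 ∂μ ≤ y3 ∧ y4 = (μ Set.univ).toReal := by
  simp [integral_newsMoments hμ, mem_newsSlackCone, sub_eq_zero]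

theorem coe_momentCone_newsMoments_sup (ωlo ωhi : ℝ) :
    ((momentCone (Set.Icc ωlo ωhi) newsMoments ⊔ newsSlackCone :
      PointedCone ℝ (ℝ × ℝ × ℝ × ℝ)) : Set (ℝ × ℝ × ℝ × ℝ)) =
      {q : ℝ × ℝ × ℝ × ℝ | ∃ μ : Measure ℝ, IsFiniteMeasure μ ∧
        μ (Set.Icc ωlo ωhi)ᶜ = 0 ∧ ∃ s1 s2 s3 : ℝ, 0 ≤ s1 ∧ 0 ≤ s2 ∧ 0 ≤ s3 ∧
        q.1 = (∫ ω, ω ∂μ) + s1 ∧ q.2.1 = (∫ ω, ω ^ 2 ∂μ) + s2 ∧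
        q.2.2.1 = (∫ ω, ω ^ 4 ∂μ) + s3 ∧ q.2.2.2 = (μ Set.univ).toReal} := by
  ext ⟨y1, y2, y3, y4⟩
  rw [SetLike.mem_coe, mem_momentCone_sup_iff]
  constructor
  · rintro ⟨μ, hfin, hμ, -, hslack⟩
    obtain ⟨h1, h2, h3, h4⟩ := (sub_integral_newsMoments_mem_newsSlackCone_iff hμ).1 hslack
    exact ⟨μ, hfin, hμ, _, _, _, sub_nonneg.2 h1, sub_nonneg.2 h2, sub_nonneg.2 h3,
      (add_sub_cancel _ _).symm, (add_sub_cancel _ _).symm, (add_sub_cancel _ _).symm, h4⟩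
  · rintro ⟨μ, hfin, hμ, s1, s2, s3, hs1, hs2, hs3, h1, h2, h3, h4⟩
    exact ⟨μ, hfin, hμ, integrable_newsMoments hμ,
      (sub_integral_newsMoments_mem_newsSlackCone_iff hμ).2
        ⟨(le_add_of_nonneg_right hs1).trans_eq h1.symm,
          (le_add_of_nonneg_right hs2).trans_eq h2.symm,
          (le_add_of_nonneg_right hs3).trans_eq h3.symm, h4⟩⟩

theorem news4Vals_eq_momentProblemVals (ωlo ωhi x γ1 γ2 γ3 : ℝ) :
    News4Vals ωlo ωhi x γ1 γ2 γ3 =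
      momentProblemVals (Set.Icc ωlo ωhi) newsMoments (fun ω => min (x - ω) 0) newsSlackCone
        (γ1, γ2, γ3, 1) := by
  ext val
  constructor
  · rintro ⟨μ, _, hμ, h1, h2, h3, rfl⟩
    exact ⟨μ, inferInstance, hμ, integrable_newsMoments hμ,
      integrable_of_continuousOn_of_measure_compl_eq_zero isCompact_Icc hμ (by fun_prop),
      (sub_integral_newsMoments_mem_newsSlackCone_iff hμ).2 ⟨h1, h2, h3, by simp⟩, rfl⟩
  · rintro ⟨μ, _, hμ, -, -, hslack, rfl⟩
    obtain ⟨h1, h2, h3, hmass⟩ := (sub_integral_newsMoments_mem_newsSlackCone_iff hμ).1 hslack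
    exact ⟨μ, ⟨(ENNReal.toReal_eq_one_iff _).1 hmass.symm⟩, hμ, h1, h2, h3, rfl⟩

theorem isMomentDualFeasible_newsMultiplier_iff {lam1 lam2 lam3 lam4 : ℝ} :
    IsMomentDualFeasible (Set.Icc ωlo ωhi) newsMoments (fun ω => min (x - ω) 0) newsSlackCone
        (newsMultiplier lam1 lam2 lam3 lam4) ↔
      0 ≤ lam1 ∧ 0 ≤ lam2 ∧ 0 ≤ lam3 ∧
        (∀ v ∈ Set.Icc ωlo ωhi, 0 ≤ (x + lam4) + (-1 + lam1) * v + lam2 * v ^ 2 + lam3 * v ^ 4) ∧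
        ∀ v ∈ Set.Icc ωlo ωhi, 0 ≤ lam4 + lam1 * v + lam2 * v ^ 2 + lam3 * v ^ 4 := by
  have hcost (v : ℝ) : newsMultiplier lam1 lam2 lam3 lam4 (newsMoments v) ≤ min (x - v) 0 ↔
      0 ≤ (x + lam4) + (-1 + lam1) * v + lam2 * v ^ 2 + lam3 * v ^ 4 ∧
        0 ≤ lam4 + lam1 * v + lam2 * v ^ 2 + lam3 * v ^ 4 := by
    rw [newsMoments, newsMultiplier_apply, le_min_iff]
    constructor <;> rintro ⟨hx, h0⟩ <;> constructor <;> linarith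
  constructor
  · rintro ⟨hle, hslack⟩
    have h1 := hslack (1, 0, 0, 0) (by simp [mem_newsSlackCone])
    have h2 := hslack (0, 1, 0, 0) (by simp [mem_newsSlackCone])
    have h3 := hslack (0, 0, 1, 0) (by simp [mem_newsSlackCone])
    rw [newsMultiplier_apply] at h1 h2 h3
    exact ⟨by linarith, by linarith, by linarith, fun v hv => ((hcost v).1 (hle v hv)).1,
      fun v hv => ((hcost v).1 (hle v hv)).2⟩
  · rintro ⟨h1, h2, h3, hx, h0⟩
    refine ⟨fun v hv => (hcost v).2 ⟨hx v hv, h0 v hv⟩, ?_⟩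
    rintro ⟨s1, s2, s3, s4⟩ hs
    obtain ⟨hs1, hs2, hs3, rfl⟩ := mem_newsSlackCone.1 hs
    rw [newsMultiplier_apply]
    linarith [mul_nonneg h1 hs1, mul_nonneg h2 hs2, mul_nonneg h3 hs3]

theorem news4SDPVals_eq_momentDualVals (hle : ωlo ≤ ωhi) (x γ1 γ2 γ3 : ℝ) :
    News4SDPVals ωlo ωhi x γ1 γ2 γ3 =
      momentDualVals (Set.Icc ωlo ωhi) newsMoments (fun ω => min (x - ω) 0) newsSlackCone
        (γ1, γ2, γ3, 1) := by
  ext val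
  constructor
  · rintro ⟨lam1, lam2, lam3, lam4, Z, Z', Q, Q', h1, h2, h3, hZ, hZ', hQ, hQ', e0, e0', e1, e1',
      e2, e2', e3, e3', e4, e4', rfl⟩
    refine ⟨newsMultiplier lam1 lam2 lam3 lam4, isMomentDualFeasible_newsMultiplier_iff.2
      ⟨h1, h2, h3, (exists_isQuarticCertificate_iff hle h2 h3).1
        ⟨Z, Q, hZ, hQ, e0, e1, e2, e3, e4⟩, (exists_isQuarticCertificate_iff hle h2 h3).1
        ⟨Z', Q', hZ', hQ', e0', e1', e2', e3', e4'⟩⟩, ?_⟩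
    rw [newsMultiplier_apply, mul_one]
  · rintro ⟨g, hg, rfl⟩
    obtain ⟨lam1, lam2, lam3, lam4, rfl⟩ := exists_newsMultiplier_eq g
    obtain ⟨h1, h2, h3, hx, h0⟩ := isMomentDualFeasible_newsMultiplier_iff.1 hg
    obtain ⟨Z, Q, hZ, hQ, e0, e1, e2, e3, e4⟩ := (exists_isQuarticCertificate_iff hle h2 h3).2 hx
    obtain ⟨Z', Q', hZ', hQ', e0', e1', e2', e3', e4'⟩ :=
      (exists_isQuarticCertificate_iff hle h2 h3).2 h0
    refine ⟨lam1, lam2, lam3, lam4, Z, Z', Q, Q', h1, h2, h3, hZ, hZ', hQ, hQ', e0, e0', e1, e1',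
      e2, e2', e3, e3', e4, e4', ?_⟩
    rw [newsMultiplier_apply, mul_one]

end Newsvendor

theorem newsvendor_fourth_moment_sdp_duality_general (ωlo ωhi x γ1 γ2 γ3 : ℝ)
    (hint : ((γ1, γ2, γ3, (1 : ℝ)) : ℝ × ℝ × ℝ × ℝ) ∈ interior
      {q : ℝ × ℝ × ℝ × ℝ | ∃ μ : Measure ℝ, IsFiniteMeasure μ ∧
        μ (Set.Icc ωlo ωhi)ᶜ = 0 ∧ ∃ s1 s2 s3 : ℝ, 0 ≤ s1 ∧ 0 ≤ s2 ∧ 0 ≤ s3 ∧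
        q.1 = (∫ ω, ω ∂μ) + s1 ∧ q.2.1 = (∫ ω, ω ^ 2 ∂μ) + s2 ∧
        q.2.2.1 = (∫ ω, ω ^ 4 ∂μ) + s3 ∧ q.2.2.2 = (μ Set.univ).toReal})
    (p : ℝ) (hinf : IsGLB (News4Vals ωlo ωhi x γ1 γ2 γ3) p) :
    IsGreatest (News4SDPVals ωlo ωhi x γ1 γ2 γ3) p := by
  have hle : ωlo ≤ ωhi := by
    obtain ⟨_, μ, _, hμ, -⟩ := hinf.nonempty
    exact Set.nonempty_Icc.1 (nonempty_of_measure_ne_zero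
      (prob_compl_eq_zero_iff measurableSet_Icc |>.1 hμ ▸ one_ne_zero))
  rw [← coe_momentCone_newsMoments_sup] at hint
  rw [news4Vals_eq_momentProblemVals] at hinf
  rw [news4SDPVals_eq_momentDualVals hle]
  refine isGreatest_momentDualVals_of_isGLB (mem_interior_momentEpigraph (fun μ _ hμ => ?_)
    (fun v _ => min_le_right _ _) hint zero_lt_one) hinf
  exact integrable_of_continuousOn_of_measure_compl_eq_zero isCompact_Icc hμ (by fun_prop)

/-- Exact SDP reformulation of the Newsvendor moment problem
with mean, second- and fourth-order moment bounds: `min (N′) = max (N3)`. -/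
theorem newsvendor_fourth_moment_sdp_duality (ωlo ωhi x γ1 γ2 γ3 : ℝ)
    (h0 : 0 ≤ ωlo) (hlt : ωlo < ωhi)
    (hint : ((γ1, γ2, γ3, (1 : ℝ)) : ℝ × ℝ × ℝ × ℝ) ∈ interior
      {q : ℝ × ℝ × ℝ × ℝ | ∃ μ : Measure ℝ, IsFiniteMeasure μ ∧
        μ (Set.Icc ωlo ωhi)ᶜ = 0 ∧ ∃ s1 s2 s3 : ℝ, 0 ≤ s1 ∧ 0 ≤ s2 ∧ 0 ≤ s3 ∧
        q.1 = (∫ ω, ω ∂μ) + s1 ∧ q.2.1 = (∫ ω, ω ^ 2 ∂μ) + s2 ∧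
        q.2.2.1 = (∫ ω, ω ^ 4 ∂μ) + s3 ∧ q.2.2.2 = (μ Set.univ).toReal})
    (p : ℝ) (hmin : IsLeast (News4Vals ωlo ωhi x γ1 γ2 γ3) p) :
    IsGreatest (News4SDPVals ωlo ωhi x γ1 γ2 γ3) p := by
  exact newsvendor_fourth_moment_sdp_duality_general ωlo ωhi x γ1 γ2 γ3 hint p hmin.isGLB

end
end

section
/- In the setting of the Newsvendor moment problem (N′) over Ω = [ω̲, ω̄] with moment bounds γ_1, γ_2, γ_3 on E[ω], E[ω²], E[ω⁴], assume (N′) admits a minimizer, the interior point condition (γ_1, γ_2, γ_3, 1) ∈ int{{(E_μ^Ω[ω], E_μ^Ω[ω²], E_μ^Ω[ω⁴], E_μ^Ω[1]) : μ ⪰ 0} + ℝ_+³ × {0}} holds, and max(N3) = min(N4), where (N4) is the SDP: minimize z¹ + z² over y¹, y² ∈ ℝ⁵ and z¹, z² ∈ ℝ subject to y_1¹ + y_1² ≤ γ_1, y_2¹ + y_2² ≤ γ_2, y_4¹ + y_4² ≤ γ_3, y_0¹ + y_0² = 1, x y_0¹ − y_1¹ ≤ z¹, 0 ≤ z², and for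 k=1,2: y_0^k F_0 + y_1^k F_1 ⪰ 0 and the 3×3 Hankel matrix [[y_0^k, y_1^k, y_2^k],[y_1^k, y_2^k, y_3^k],[y_2^k, y_3^k, y_4^k]] ⪰ 0. Let (ȳ^k, z̄^k) be a minimizer of (N4) with ȳ_0^k > 0 for k = 1,2, and set û^k = ȳ_1^k / ȳ_0^k. Then ȳ_0¹ 𝟙_{û¹} + ȳ_0² 𝟙_{û²} is a minimizer of (N′). -/
open MeasureTheory Matrix
open scoped BigOperators

noncomputable section

/-- Feasibility for the recovery SDP (N4). -/
def News4RecFeasible (ωlo ωhi x γ1 γ2 γ3 : ℝ) (y : Fin 2 → Fin 5 → ℝ)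
    (z : Fin 2 → ℝ) : Prop :=
  y 0 1 + y 1 1 ≤ γ1 ∧ y 0 2 + y 1 2 ≤ γ2 ∧ y 0 4 + y 1 4 ≤ γ3 ∧
  y 0 0 + y 1 0 = 1 ∧ x * y 0 0 - y 0 1 ≤ z 0 ∧ 0 ≤ z 1 ∧
  (∀ k, ((y k 0) • !![-ωlo, 0; 0, ωhi] + (y k 1) • !![(1:ℝ), 0; 0, -1]).PosSemidef) ∧
  (∀ k, (!![y k 0, y k 1, y k 2; y k 1, y k 2, y k 3;
            y k 2, y k 3, y k 4]).PosSemidef)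

/-!
A dual feasible point of (N3) certifies, through sum-of-squares decompositions on `[ωlo, ωhi]`, that
some `-λ₁ ω - λ₂ ω² - λ₃ ω⁴ - λ₄` lies below `min (x - ω) 0`; integrating bounds (N′) below by the
dual value. Conversely, collapsing each truncated moment block `y k` of (N4) to an atom of mass
`y k 0` at its barycentre keeps the mean and, by Hankel positivity, can only lower the second and
fourth moments, while the atom pays at most `z k`. Both bounds meet at the common optimal value.
-/

/-- The finitely supported measure with mass `w k` at `u k`, negative weights counting as zero. It
is the form in which the minimizer of (N′) is recovered from (N4). -/
def atomicMeasure {ι α : Type*} [Fintype ι] [MeasurableSpace α] (w : ι → ℝ) (u : ι → α) :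
    Measure α :=
  ∑ k, ENNReal.ofReal (w k) • Measure.dirac (u k)

section AtomicMeasure

variable {ι α : Type*} [Fintype ι] [MeasurableSpace α] {w : ι → ℝ} {u : ι → α}

lemma isProbabilityMeasure_atomicMeasure (hw : ∀ k, 0 ≤ w k) (hsum : ∑ k, w k = 1) :
    IsProbabilityMeasure (atomicMeasure w u) := by
  constructor
  simp [atomicMeasure, ← ENNReal.ofReal_sum_of_nonneg fun k _ => hw k, hsum]

lemma atomicMeasure_eq_zero [MeasurableSingletonClass α] {s : Set α}
    (hs : ∀ k, 0 < w k → u k ∉ s) : atomicMeasure w u s = 0 := by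
  simpa [atomicMeasure, or_iff_not_imp_left] using hs

lemma integral_atomicMeasure [MeasurableSingletonClass α] (hw : ∀ k, 0 ≤ w k) (f : α → ℝ) :
    ∫ ω, f ω ∂atomicMeasure w u = ∑ k, w k * f (u k) := by
  rw [atomicMeasure, integral_finsetSum_measure fun k _ =>
    (integrable_dirac enorm_lt_top).smul_measure ENNReal.ofReal_ne_top]
  simp [integral_smul_measure, hw]

end AtomicMeasure

section WeakDuality

lemma integrable_of_continuousOn_of_isCompact {α : Type*} [TopologicalSpace α] [T2Space α]
    [MeasurableSpace α] [OpensMeasurableSpace α] {μ : Measure α}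
    [IsFiniteMeasureOnCompacts μ] {K : Set α} (hK : IsCompact K) (hμK : ∀ᵐ ω ∂μ, ω ∈ K)
    {f : α → ℝ} (hf : ContinuousOn f K) : Integrable f μ := by
  have hfK : IntegrableOn f K μ := hf.integrableOn_compact hK
  rwa [IntegrableOn, Measure.restrict_eq_self_of_ae_mem hμK] at hfK

lemma neg_sum_sub_le_integral_of_ae {α ι : Type*} [Fintype ι] [MeasurableSpace α]
    {μ : Measure α} [IsProbabilityMeasure μ] {f : α → ℝ} {g : ι → α → ℝ} {l c : ι → ℝ} {l₀ : ℝ}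
    (hl : ∀ i, 0 ≤ l i) (hf : Integrable f μ) (hg : ∀ i, Integrable (g i) μ)
    (hc : ∀ i, ∫ ω, g i ω ∂μ ≤ c i) (hle : ∀ᵐ ω ∂μ, -∑ i, l i * g i ω - l₀ ≤ f ω) :
    -∑ i, l i * c i - l₀ ≤ ∫ ω, f ω ∂μ := by
  have hneg : Integrable (fun ω => -∑ i, l i * g i ω) μ :=
    (integrable_finsetSum _ fun i _ => (hg i).const_mul (l i)).neg
  calc -∑ i, l i * c i - l₀
      ≤ -∑ i, l i * ∫ ω, g i ω ∂μ - l₀ := by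
        gcongr with i
        exacts [hl i, hc i]
    _ = ∫ ω, (-∑ i, l i * g i ω - l₀) ∂μ := by
        rw [integral_sub hneg (integrable_const l₀), integral_neg,
          integral_finsetSum _ fun i _ => (hg i).const_mul (l i)]
        simp [integral_const_mul]
    _ ≤ ∫ ω, f ω ∂μ := integral_mono_ae (hneg.sub (integrable_const l₀)) hf hle

end WeakDuality

section SumOfSquares

lemma dotProduct_mulVec_monomials (Q : Matrix (Fin 3) (Fin 3) ℝ) (v : ℝ) :
    ![1, v, v ^ 2] ⬝ᵥ Q *ᵥ ![1, v, v ^ 2] = (Q * B0).trace + (Q * B1).trace * v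
      + (Q * B2).trace * v ^ 2 + (Q * B3).trace * v ^ 3 + (Q * B4).trace * v ^ 4 := by
  simp only [B0, B1, B2, B3, B4, dotProduct, mulVec, trace, diag_apply, Matrix.mul_apply, of_apply,
    cons_val, cons_val', cons_val_fin_one, Fin.sum_univ_three]
  ring

lemma trace_mul_interval_add_nonneg {Z : Matrix (Fin 2) (Fin 2) ℝ} (hZ : Z.PosSemidef)
    {lo hi v : ℝ} (hv : v ∈ Set.Icc lo hi) :
    0 ≤ (Z * !![-lo, 0; 0, hi]).trace + (Z * !![1, 0; 0, -1]).trace * v := by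
  have hlo : 0 ≤ Z 0 0 * (v - lo) := mul_nonneg hZ.diag_nonneg (sub_nonneg.2 hv.1)
  have hhi : 0 ≤ Z 1 1 * (hi - v) := mul_nonneg hZ.diag_nonneg (sub_nonneg.2 hv.2)
  calc 0 ≤ Z 0 0 * (v - lo) + Z 1 1 * (hi - v) := add_nonneg hlo hhi
    _ = _ := by
      simp only [trace, diag_apply, Matrix.mul_apply, of_apply, cons_val, cons_val',
        cons_val_fin_one, Fin.sum_univ_two]
      ring

lemma quartic_nonneg_on_Icc_of_posSemidef {Z : Matrix (Fin 2) (Fin 2) ℝ}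
    {Q : Matrix (Fin 3) (Fin 3) ℝ} (hZ : Z.PosSemidef) (hQ : Q.PosSemidef)
    {lo hi c₀ c₁ c₂ c₃ c₄ : ℝ} (h₀ : (Q * B0).trace = c₀ - (Z * !![-lo, 0; 0, hi]).trace)
    (h₁ : (Q * B1).trace = c₁ - (Z * !![1, 0; 0, -1]).trace) (h₂ : (Q * B2).trace = c₂)
    (h₃ : (Q * B3).trace = c₃) (h₄ : (Q * B4).trace = c₄) {v : ℝ} (hv : v ∈ Set.Icc lo hi) :
    0 ≤ c₀ + c₁ * v + c₂ * v ^ 2 + c₃ * v ^ 3 + c₄ * v ^ 4 := by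
  have hsos : 0 ≤ ![1, v, v ^ 2] ⬝ᵥ Q *ᵥ ![1, v, v ^ 2] :=
    hQ.dotProduct_mulVec_nonneg ![1, v, v ^ 2]
  have hinterval := trace_mul_interval_add_nonneg hZ hv
  rw [dotProduct_mulVec_monomials, h₀, h₁, h₂, h₃, h₄] at hsos
  linarith

end SumOfSquares

section MomentBlock

lemma mem_Icc_of_posSemidef_interval {lo hi a u : ℝ} (ha : 0 < a)
    (h : (a • !![-lo, 0; 0, hi] + (a * u) • !![(1 : ℝ), 0; 0, -1]).PosSemidef) :
    u ∈ Set.Icc lo hi := by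
  have hlo : 0 ≤ a * (u - lo) := by simpa [mul_sub, neg_add_eq_sub] using h.diag_nonneg (i := 0)
  have hhi : 0 ≤ a * (hi - u) := by simpa [mul_sub, ← sub_eq_add_neg] using h.diag_nonneg (i := 1)
  exact ⟨sub_nonneg.1 (nonneg_of_mul_nonneg_right hlo ha),
    sub_nonneg.1 (nonneg_of_mul_nonneg_right hhi ha)⟩

variable {a b c d e u : ℝ}

lemma hankel_form_nonneg (h : !![a, b, c; b, c, d; c, d, e].PosSemidef) (p q r : ℝ) :
    0 ≤ a * p ^ 2 + 2 * b * (p * q) + c * (2 * (p * r) + q ^ 2) + 2 * d * (q * r) + e * r ^ 2 :=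
  calc 0 ≤ ![p, q, r] ⬝ᵥ !![a, b, c; b, c, d; c, d, e] *ᵥ ![p, q, r] :=
        h.dotProduct_mulVec_nonneg ![p, q, r]
    _ = _ := by
      simp only [dotProduct, mulVec, of_apply, cons_val, cons_val', cons_val_fin_one,
        Fin.sum_univ_three]
      ring

lemma mul_sq_le_of_posSemidef_hankel (h : !![a, b, c; b, c, d; c, d, e].PosSemidef)
    (hu : a * u = b) : a * u ^ 2 ≤ c := by
  have hform := hankel_form_nonneg h u (-1) 0
  rw [← hu] at hform
  linarith

lemma mul_pow_four_le_of_posSemidef_hankel (h : !![a, b, c; b, c, d; c, d, e].PosSemidef)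
    (hu : a * u = b) : a * u ^ 4 ≤ e := by
  have hform := hankel_form_nonneg h (u ^ 2) 0 (-1)
  have hsq : u ^ 2 * (a * u ^ 2) ≤ u ^ 2 * c :=
    mul_le_mul_of_nonneg_left (mul_sq_le_of_posSemidef_hankel h hu) (sq_nonneg u)
  linarith

end MomentBlock

section Newsvendor

variable {ωlo ωhi x γ1 γ2 γ3 : ℝ}

/-- Feasibility of a measure for (N′); `News4Vals` collects the objective values of exactly these
measures. -/
def News4Feasible (ωlo ωhi γ1 γ2 γ3 : ℝ) (μ : Measure ℝ) : Prop :=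
  IsProbabilityMeasure μ ∧ μ (Set.Icc ωlo ωhi)ᶜ = 0 ∧
    (∫ ω, ω ∂μ) ≤ γ1 ∧ (∫ ω, ω ^ 2 ∂μ) ≤ γ2 ∧ (∫ ω, ω ^ 4 ∂μ) ≤ γ3

lemma exists_quartic_le_min_of_mem_News4SDPVals {p : ℝ}
    (hp : p ∈ News4SDPVals ωlo ωhi x γ1 γ2 γ3) :
    ∃ (l : Fin 3 → ℝ) (l₀ : ℝ), (∀ i, 0 ≤ l i) ∧
      (∀ ω ∈ Set.Icc ωlo ωhi, -∑ i, l i * ω ^ (![1, 2, 4] i) - l₀ ≤ min (x - ω) 0) ∧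
      p = -∑ i, l i * ![γ1, γ2, γ3] i - l₀ := by
  obtain ⟨l₁, l₂, l₃, l₄, Z, Z', Q, Q', hl₁, hl₂, hl₃, hZ, hZ', hQ, hQ', h₀, h₀', h₁, h₁',
    h₂, h₂', h₃, h₃', h₄, h₄', rfl⟩ := hp
  refine ⟨![l₁, l₂, l₃], l₄, by simp [Fin.forall_fin_succ, hl₁, hl₂, hl₃], fun ω hω => ?_, ?_⟩
  · have hlinear := quartic_nonneg_on_Icc_of_posSemidef hZ hQ h₀ h₁ h₂ h₃ h₄ hω
    have hzero := quartic_nonneg_on_Icc_of_posSemidef hZ' hQ' h₀' h₁' h₂' h₃' h₄' hω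
    simp only [Fin.sum_univ_three, Matrix.cons_val]
    exact le_min (by linarith) (by linarith)
  · simp only [Fin.sum_univ_three, Matrix.cons_val]
    ring

theorem News4Feasible.le_integral_of_mem_News4SDPVals {μ : Measure ℝ}
    (hμ : News4Feasible ωlo ωhi γ1 γ2 γ3 μ) {p : ℝ}
    (hp : p ∈ News4SDPVals ωlo ωhi x γ1 γ2 γ3) : p ≤ ∫ ω, min (x - ω) 0 ∂μ := by
  obtain ⟨_, hsupp, hγ1, hγ2, hγ3⟩ := hμ
  obtain ⟨l, l₀, hl, hle, rfl⟩ := exists_quartic_le_min_of_mem_News4SDPVals hp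
  have hmem : ∀ᵐ ω ∂μ, ω ∈ Set.Icc ωlo ωhi := hsupp
  have hcont {f : ℝ → ℝ} (hf : Continuous f) : Integrable f μ :=
    integrable_of_continuousOn_of_isCompact isCompact_Icc hmem hf.continuousOn
  refine neg_sum_sub_le_integral_of_ae (g := fun i ω => ω ^ (![1, 2, 4] i)) hl
    (hcont (by fun_prop)) (fun i => hcont (by fun_prop)) ?_ (hmem.mono hle)
  simp [Fin.forall_fin_succ, hγ1, hγ2, hγ3]

section Recovery

variable {y : Fin 2 → Fin 5 → ℝ} {z u : Fin 2 → ℝ}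

lemma News4RecFeasible.mass_nonneg (h : News4RecFeasible ωlo ωhi x γ1 γ2 γ3 y z) (k : Fin 2) :
    0 ≤ y k 0 :=
  (h.2.2.2.2.2.2.2 k).diag_nonneg (i := 0)

theorem News4RecFeasible.feasible_atomicMeasure (h : News4RecFeasible ωlo ωhi x γ1 γ2 γ3 y z)
    (hu : ∀ k, y k 0 * u k = y k 1) :
    News4Feasible ωlo ωhi γ1 γ2 γ3 (atomicMeasure (y · 0) u) := by
  have hw := h.mass_nonneg
  obtain ⟨hγ1, hγ2, hγ3, hmass, -, -, hinterval, hhankel⟩ := h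
  refine ⟨isProbabilityMeasure_atomicMeasure hw (by simpa using hmass),
    atomicMeasure_eq_zero fun k hk => Set.notMem_compl_iff.2 ?_, ?_, ?_, ?_⟩
  · exact mem_Icc_of_posSemidef_interval hk (by simpa only [hu k] using hinterval k)
  all_goals rw [integral_atomicMeasure hw, Fin.sum_univ_two]
  · simpa only [hu] using hγ1
  · exact (add_le_add (mul_sq_le_of_posSemidef_hankel (hhankel 0) (hu 0))
      (mul_sq_le_of_posSemidef_hankel (hhankel 1) (hu 1))).trans hγ2
  · exact (add_le_add (mul_pow_four_le_of_posSemidef_hankel (hhankel 0) (hu 0))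
      (mul_pow_four_le_of_posSemidef_hankel (hhankel 1) (hu 1))).trans hγ3

theorem News4RecFeasible.integral_atomicMeasure_le
    (h : News4RecFeasible ωlo ωhi x γ1 γ2 γ3 y z) (hu : ∀ k, y k 0 * u k = y k 1) :
    ∫ ω, min (x - ω) 0 ∂atomicMeasure (y · 0) u ≤ z 0 + z 1 := by
  have hw := h.mass_nonneg
  obtain ⟨-, -, -, -, hz0, hz1, -, -⟩ := h
  rw [integral_atomicMeasure hw, Fin.sum_univ_two]
  refine add_le_add ?_ ?_
  · calc y 0 0 * min (x - u 0) 0 ≤ y 0 0 * (x - u 0) :=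
          mul_le_mul_of_nonneg_left (min_le_left _ _) (hw 0)
      _ = x * y 0 0 - y 0 1 := by rw [mul_sub, hu, mul_comm]
      _ ≤ z 0 := hz0
  · exact (mul_nonpos_of_nonneg_of_nonpos (hw 1) (min_le_right _ _)).trans hz1

/-- A block of zero mass leaves `u k` unconstrained; this is harmless as the atom then vanishes. -/
theorem newsvendor_fourth_moment_recovery_general
    (hfeas : News4RecFeasible ωlo ωhi x γ1 γ2 γ3 y z)
    (hdual : z 0 + z 1 ∈ News4SDPVals ωlo ωhi x γ1 γ2 γ3) (hu : ∀ k, y k 0 * u k = y k 1) :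
    News4Feasible ωlo ωhi γ1 γ2 γ3 (atomicMeasure (y · 0) u) ∧
      ∀ val ∈ News4Vals ωlo ωhi x γ1 γ2 γ3,
        ∫ ω, min (x - ω) 0 ∂atomicMeasure (y · 0) u ≤ val := by
  refine ⟨hfeas.feasible_atomicMeasure hu, ?_⟩
  rintro val ⟨μ, hprob, hsupp, hγ1, hγ2, hγ3, rfl⟩
  have hμ : News4Feasible ωlo ωhi γ1 γ2 γ3 μ := ⟨hprob, hsupp, hγ1, hγ2, hγ3⟩
  exact (hfeas.integral_atomicMeasure_le hu).trans (hμ.le_integral_of_mem_News4SDPVals hdual)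

end Recovery

end Newsvendor

/-- Recovering an optimal probability measure for the
Newsvendor moment problem with fourth-order moments from the SDP (N4). -/
theorem newsvendor_fourth_moment_recovery (ωlo ωhi x γ1 γ2 γ3 : ℝ)
    (h0 : 0 ≤ ωlo) (hlt : ωlo < ωhi)
    (hPmin : ∃ p, IsLeast (News4Vals ωlo ωhi x γ1 γ2 γ3) p)
    (hint : ((γ1, γ2, γ3, (1 : ℝ)) : ℝ × ℝ × ℝ × ℝ) ∈ interior
      {q : ℝ × ℝ × ℝ × ℝ | ∃ μ : Measure ℝ, IsFiniteMeasure μ ∧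
        μ (Set.Icc ωlo ωhi)ᶜ = 0 ∧ ∃ s1 s2 s3 : ℝ, 0 ≤ s1 ∧ 0 ≤ s2 ∧ 0 ≤ s3 ∧
        q.1 = (∫ ω, ω ∂μ) + s1 ∧ q.2.1 = (∫ ω, ω ^ 2 ∂μ) + s2 ∧
        q.2.2.1 = (∫ ω, ω ^ 4 ∂μ) + s3 ∧ q.2.2.2 = (μ Set.univ).toReal})
    (ybar : Fin 2 → Fin 5 → ℝ) (zbar : Fin 2 → ℝ)
    (hfeas : News4RecFeasible ωlo ωhi x γ1 γ2 γ3 ybar zbar)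
    (hminN4 : ∀ y z, News4RecFeasible ωlo ωhi x γ1 γ2 γ3 y z →
      zbar 0 + zbar 1 ≤ z 0 + z 1)
    (hstrong : IsGreatest (News4SDPVals ωlo ωhi x γ1 γ2 γ3) (zbar 0 + zbar 1))
    (hy0 : ∀ k, 0 < ybar k 0) :
    (IsProbabilityMeasure
        (ENNReal.ofReal (ybar 0 0) • Measure.dirac (ybar 0 1 / ybar 0 0)
          + ENNReal.ofReal (ybar 1 0) • Measure.dirac (ybar 1 1 / ybar 1 0)) ∧
      (ENNReal.ofReal (ybar 0 0) • Measure.dirac (ybar 0 1 / ybar 0 0)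
          + ENNReal.ofReal (ybar 1 0) • Measure.dirac (ybar 1 1 / ybar 1 0))
        (Set.Icc ωlo ωhi)ᶜ = 0 ∧
      (∫ ω, ω ∂(ENNReal.ofReal (ybar 0 0) • Measure.dirac (ybar 0 1 / ybar 0 0)
          + ENNReal.ofReal (ybar 1 0) • Measure.dirac (ybar 1 1 / ybar 1 0)))
        ≤ γ1 ∧
      (∫ ω, ω ^ 2 ∂(ENNReal.ofReal (ybar 0 0) • Measure.dirac (ybar 0 1 / ybar 0 0)
          + ENNReal.ofReal (ybar 1 0) • Measure.dirac (ybar 1 1 / ybar 1 0)))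
        ≤ γ2 ∧
      (∫ ω, ω ^ 4 ∂(ENNReal.ofReal (ybar 0 0) • Measure.dirac (ybar 0 1 / ybar 0 0)
          + ENNReal.ofReal (ybar 1 0) • Measure.dirac (ybar 1 1 / ybar 1 0)))
        ≤ γ3) ∧
    ∀ val ∈ News4Vals ωlo ωhi x γ1 γ2 γ3,
      (∫ ω, min (x - ω) 0
          ∂(ENNReal.ofReal (ybar 0 0) • Measure.dirac (ybar 0 1 / ybar 0 0)
            + ENNReal.ofReal (ybar 1 0) • Measure.dirac (ybar 1 1 / ybar 1 0)))
        ≤ val := by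
  simpa only [News4Feasible, atomicMeasure, Fin.sum_univ_two] using
    newsvendor_fourth_moment_recovery_general hfeas hstrong.1 fun k => mul_div_cancel₀ _ (hy0 k).ne'

end
end

section
/- Let α, β, b ≥ 0 and c ∈ ℝ, and define f on [0, ∞) by f(v) = α(v−b)² + β(v−b)⁴ + c for 0 ≤ v ≤ b and f(v) = c for v > b. Then for every v ≥ 0, f(v) = min_{k=1,2} max_{ℓ=1,2} g_ℓ^k(v), where g_1^1(v) = g_2^1(v) = α(v−b)² + β(v−b)⁴ + c, g_1^2(v) = −(αb + βb³)v + (αb² + βb⁴ + c), and g_2^2(v) = c. In particular, f is the restriction to [0,∞) of a piecewise SOS-convex function. -/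
open MvPolynomial Matrix
open scoped BigOperators

noncomputable section

def IsSOS {m : ℕ} (p : MvPolynomial (Fin m) ℝ) : Prop :=
  ∃ (J : ℕ) (f : Fin J → MvPolynomial (Fin m) ℝ), p = ∑ j, (f j) ^ 2

def polyHessian {m : ℕ} (f : MvPolynomial (Fin m) ℝ) :
    Matrix (Fin m) (Fin m) (MvPolynomial (Fin m) ℝ) :=
  Matrix.of fun i j => pderiv i (pderiv j f)

def IsSOSConvex {m : ℕ} (f : MvPolynomial (Fin m) ℝ) : Prop :=
  ∃ (s : ℕ) (P : Matrix (Fin s) (Fin m) (MvPolynomial (Fin m) ℝ)),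
    polyHessian f = Pᵀ * P

/-- The SOS-convex pieces of the piecewise quadratic-quartic function:
`g_1^1 = g_2^1 = α(v−b)² + β(v−b)⁴ + c`,
`g_1^2 = −(αb + βb³)v + (αb² + βb⁴ + c)`, `g_2^2 = c`. -/
def pqqPieces (α β b c : ℝ) (k ℓ : Fin 2) : MvPolynomial (Fin 1) ℝ :=
  if k = 0 then C α * (X 0 - C b) ^ 2 + C β * (X 0 - C b) ^ 4 + C c
  else if ℓ = 0 then
    -(C (α * b + β * b ^ 3)) * X 0 + C (α * b ^ 2 + β * b ^ 4 + c)
  else C c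

/-!
A polynomial with vanishing Hessian is SOS-convex, and the Hessian of an even power of an affine
polynomial `ℓ` is a nonnegative multiple of `(ℓ ^ k • ∇ℓ) (ℓ ^ k • ∇ℓ)ᵀ`; SOS-convexity of the
pieces follows because it passes to conic combinations. For the min-max formula, the affine piece
is the chord of the convex piece between `v = 0` and its minimiser `v = b`. It therefore lies above
the convex piece on `[0, b]` and below the minimum `c` beyond `b`.
-/

section AffinePolynomials

variable {σ R : Type*}

theorem totalDegree_X_sub_C_le_one [CommRing R] (i : σ) (b : R) :
    (X i - C b : MvPolynomial σ R).totalDegree ≤ 1 :=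
  (totalDegree_sub_C_le _ _).trans ((totalDegree_monomial_le _ _).trans (by simp))

theorem totalDegree_C_mul_X_add_C_le_one [CommSemiring R] (i : σ) (a b : R) :
    (C a * X i + C b).totalDegree ≤ 1 := by
  refine (totalDegree_add _ _).trans (max_le ?_ (by simp))
  rw [C_mul_X_eq_monomial]
  exact (totalDegree_monomial_le _ _).trans (by simp)

theorem pderiv_pderiv_eq_zero_of_totalDegree_le_one [CommSemiring R] {p : MvPolynomial σ R}
    (hp : p.totalDegree ≤ 1) (i j : σ) : pderiv i (pderiv j p) = 0 := by
  ext d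
  let e := d + Finsupp.single i 1 + Finsupp.single j 1
  have hdeg : p.totalDegree < e.degree := by
    simp only [e, map_add, Finsupp.degree_single]
    lia
  rw [coeff_pderiv, coeff_pderiv, coeff_eq_zero_of_totalDegree_lt hdeg, zero_mul, zero_mul,
    coeff_zero]

end AffinePolynomials

section SOSConvex

variable {m : ℕ} {f g p : MvPolynomial (Fin m) ℝ}

theorem polyHessian_add (f g : MvPolynomial (Fin m) ℝ) :
    polyHessian (f + g) = polyHessian f + polyHessian g := by
  ext1 i j
  simp [polyHessian]

theorem polyHessian_smul (a : ℝ) (f : MvPolynomial (Fin m) ℝ) :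
    polyHessian (a • f) = a • polyHessian f := by
  ext1 i j
  simp [polyHessian]

theorem polyHessian_eq_zero_of_totalDegree_le_one (hp : p.totalDegree ≤ 1) :
    polyHessian p = 0 := by
  ext1 i j
  exact pderiv_pderiv_eq_zero_of_totalDegree_le_one hp i j

theorem polyHessian_pow_add_two (hp : polyHessian p = 0) (n : ℕ) :
    polyHessian (p ^ (n + 2)) =
      (((n + 2) * (n + 1) : ℝ) • p ^ n) • vecMulVec (pderiv · p) (pderiv · p) := by
  ext1 i j
  have hij : pderiv i (pderiv j p) = 0 := congrFun₂ hp i j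
  simp only [polyHessian, of_apply, Matrix.smul_apply, vecMulVec_apply, pderiv_pow, pderiv_mul,
    Derivation.map_natCast, hij, smul_eq_mul, smul_eq_C_mul, Nat.add_succ_sub_one]
  push_cast [map_mul, map_add, map_natCast, map_ofNat, map_one]
  ring

theorem isSOSConvex_of_polyHessian_eq_zero (hf : polyHessian f = 0) : IsSOSConvex f :=
  ⟨0, 0, by rw [hf, Matrix.mul_zero]⟩

theorem isSOSConvex_of_polyHessian_eq_smul {ι : Type*} [Fintype ι] {a : ℝ} (ha : 0 ≤ a)
    (P : Matrix ι (Fin m) (MvPolynomial (Fin m) ℝ)) (hP : polyHessian f = a • (Pᵀ * P)) :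
    IsSOSConvex f := by
  let e := Fintype.equivFin ι
  refine ⟨Fintype.card ι, √a • P.submatrix e.symm id, ?_⟩
  rw [hP, transpose_smul, Matrix.smul_mul, Matrix.mul_smul, smul_smul, Real.mul_self_sqrt ha,
    transpose_submatrix, submatrix_mul_equiv, submatrix_id_id]

theorem IsSOSConvex.smul {a : ℝ} (hf : IsSOSConvex f) (ha : 0 ≤ a) : IsSOSConvex (a • f) := by
  obtain ⟨s, P, hP⟩ := hf
  exact isSOSConvex_of_polyHessian_eq_smul ha P (by rw [polyHessian_smul, hP])

theorem IsSOSConvex.add (hf : IsSOSConvex f) (hg : IsSOSConvex g) : IsSOSConvex (f + g) := by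
  obtain ⟨s, P, hP⟩ := hf
  obtain ⟨t, Q, hQ⟩ := hg
  refine isSOSConvex_of_polyHessian_eq_smul zero_le_one (fromRows P Q) ?_
  rw [polyHessian_add, hP, hQ, one_smul, transpose_fromRows, fromCols_mul_fromRows]

theorem isSOSConvex_of_totalDegree_le_one (hp : p.totalDegree ≤ 1) : IsSOSConvex p :=
  isSOSConvex_of_polyHessian_eq_zero (polyHessian_eq_zero_of_totalDegree_le_one hp)

theorem isSOSConvex_C (a : ℝ) : IsSOSConvex (C a : MvPolynomial (Fin m) ℝ) :=
  isSOSConvex_of_totalDegree_le_one (by simp)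

theorem isSOSConvex_pow_of_even (hp : p.totalDegree ≤ 1) {n : ℕ} (hn : Even n) :
    IsSOSConvex (p ^ n) := by
  obtain ⟨k, rfl⟩ := hn
  cases k with
  | zero => simpa using isSOSConvex_C (m := m) 1
  | succ k =>
    refine isSOSConvex_of_polyHessian_eq_smul (a := ((k + k : ℕ) + 2) * ((k + k : ℕ) + 1))
      (by positivity) (replicateRow Unit (p ^ k • (pderiv · p))) ?_
    rw [transpose_replicateRow, ← vecMulVec_eq, smul_vecMulVec, vecMulVec_smul, smul_smul,
      ← pow_add, ← smul_assoc, ← polyHessian_pow_add_two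
        (polyHessian_eq_zero_of_totalDegree_le_one hp)]
    congr 2
    ring

end SOSConvex

theorem isSOSConvex_pqqPieces {α β : ℝ} (hα : 0 ≤ α) (hβ : 0 ≤ β) (b c : ℝ) (k ℓ : Fin 2) :
    IsSOSConvex (pqqPieces α β b c k ℓ) := by
  unfold pqqPieces
  split_ifs
  · have hdeg := totalDegree_X_sub_C_le_one (0 : Fin 1) b
    simp only [← smul_eq_C_mul]
    exact (((isSOSConvex_pow_of_even hdeg even_two).smul hα).add
      ((isSOSConvex_pow_of_even hdeg (by decide)).smul hβ)).add (isSOSConvex_C c)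
  · rw [← C_neg]
    exact isSOSConvex_of_totalDegree_le_one (totalDegree_C_mul_X_add_C_le_one _ _ _)
  · exact isSOSConvex_C c

theorem ite_eq_min_max {R : Type*} [LinearOrder R] {P : Prop} [Decidable P] {x y z : R}
    (hxy : P → x ≤ y) (hyz : ¬P → y ≤ z) (hzx : ¬P → z ≤ x) :
    (if P then x else z) = min x (max y z) := by
  split_ifs with h
  · exact (min_eq_left (le_max_of_le_left (hxy h))).symm
  · rw [max_eq_right (hyz h), min_eq_right (hzx h)]

section Chord

variable {α β b v : ℝ}

theorem quadratic_add_quartic_le_chord (hα : 0 ≤ α) (hβ : 0 ≤ β) (hv : 0 ≤ v) (hvb : v ≤ b)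
    (c : ℝ) :
    α * (v - b) ^ 2 + β * (v - b) ^ 4 + c ≤
      -(α * b + β * b ^ 3) * v + (α * b ^ 2 + β * b ^ 4 + c) := by
  have : 0 ≤ b - v := sub_nonneg.2 hvb
  have hdb : b - v ≤ b := sub_le_self b hv
  calc α * (v - b) ^ 2 + β * (v - b) ^ 4 + c
      = α * ((b - v) * (b - v)) + β * ((b - v) ^ 3 * (b - v)) + c := by ring
    _ ≤ α * (b * (b - v)) + β * (b ^ 3 * (b - v)) + c := by gcongr
    _ = -(α * b + β * b ^ 3) * v + (α * b ^ 2 + β * b ^ 4 + c) := by ring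

theorem chord_le_const (hα : 0 ≤ α) (hβ : 0 ≤ β) (hb : 0 ≤ b) (hbv : b ≤ v) (c : ℝ) :
    -(α * b + β * b ^ 3) * v + (α * b ^ 2 + β * b ^ 4 + c) ≤ c := by
  have hslope : 0 ≤ (α * b + β * b ^ 3) * (v - b) :=
    mul_nonneg (by positivity) (sub_nonneg.2 hbv)
  linarith

theorem const_le_quadratic_add_quartic (hα : 0 ≤ α) (hβ : 0 ≤ β) (b c v : ℝ) :
    c ≤ α * (v - b) ^ 2 + β * (v - b) ^ 4 + c :=
  le_add_of_nonneg_left (by positivity)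

end Chord

/-- The piecewise quadratic-quartic function
`f(v) = α(v−b)² + β(v−b)⁴ + c` on `[0, b]`, `= c` for `v > b`, is on `[0, ∞)`
the pointwise `min_{k=1,2} max_{ℓ=1,2}` of the SOS-convex polynomials
`g_1^1 = g_2^1 = α(v−b)² + β(v−b)⁴ + c`,
`g_1^2 = −(αb + βb³)v + (αb² + βb⁴ + c)`, `g_2^2 = c`; in particular it is the
restriction to `[0, ∞)` of a piecewise SOS-convex function. -/
theorem piecewise_quadratic_quartic_sosConvex (α β b c : ℝ)
    (hα : 0 ≤ α) (hβ : 0 ≤ β) (hb : 0 ≤ b) :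
    (∀ k ℓ, IsSOSConvex (pqqPieces α β b c k ℓ)) ∧
    ∀ v : ℝ, 0 ≤ v →
      (if v ≤ b then α * (v - b) ^ 2 + β * (v - b) ^ 4 + c else c) =
        min (max (eval (fun _ => v) (pqqPieces α β b c 0 0))
                 (eval (fun _ => v) (pqqPieces α β b c 0 1)))
            (max (eval (fun _ => v) (pqqPieces α β b c 1 0))
                 (eval (fun _ => v) (pqqPieces α β b c 1 1))) := by
  refine ⟨isSOSConvex_pqqPieces hα hβ b c, fun v hv => ?_⟩
  have hquartic (ℓ : Fin 2) : eval (fun _ => v) (pqqPieces α β b c 0 ℓ) =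
      α * (v - b) ^ 2 + β * (v - b) ^ 4 + c := by simp [pqqPieces]
  have hchord : eval (fun _ => v) (pqqPieces α β b c 1 0) =
      -(α * b + β * b ^ 3) * v + (α * b ^ 2 + β * b ^ 4 + c) := by simp [pqqPieces]
  have hconst : eval (fun _ => v) (pqqPieces α β b c 1 1) = c := by simp [pqqPieces]
  rw [hquartic, hquartic, hchord, hconst, max_self]
  exact ite_eq_min_max
    (fun hvb => quadratic_add_quartic_le_chord hα hβ hv hvb c)
    (fun hbv => chord_le_const hα hβ hb (not_le.1 hbv).le c)
    (fun _ => const_le_quadratic_add_quartic hα hβ b c v)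

end
end
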